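/- Every length-three reflection factorization of a Coxeter element of G4 contains reflections from both conjugacy classes R₁ and R₂. Every reflection factorization of a Coxeter element of G4 of length at least four contains at least three reflections from a single conjugacy class. -/

import Mathlib

noncomputable section

open Matrix Complex

/-- The `i`-th Hurwitz move on length-`k` tuples of group elements. -/
def IsHurwitzMove {G : Type*} [Group G] {k : ℕ} (t t' : Fin k → G) : Prop :=
  ∃ i : ℕ, ∃ h : i + 1 < k,
    t' ⟨i, Nat.lt_of_succ_lt h⟩ = t ⟨i + 1, h⟩ ∧
    t' ⟨i + 1, h⟩ = (t ⟨i + 1, h⟩)⁻¹ * t ⟨i, Nat.lt_of_succ_lt h⟩ * t ⟨i + 1, h⟩ ∧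
    ∀ j : Fin k, (j : ℕ) ≠ i → (j : ℕ) ≠ i + 1 → t' j = t j

/-- Two tuples lie in the same Hurwitz orbit. -/
def SameHurwitzOrbit {G : Type*} [Group G] {k : ℕ} (t t' : Fin k → G) : Prop :=
  Relation.EqvGen IsHurwitzMove t t'

/-- A group element `r` appears (as an entry) in the Hurwitz orbit of the tuple `t`. -/
def Appears {G : Type*} [Group G] {k : ℕ} (r : G) (t : Fin k → G) : Prop :=
  ∃ s : Fin k → G, SameHurwitzOrbit t s ∧ ∃ j, s j = r

/-- A tuple has two consecutive equal entries. -/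
def HasConsecutiveEqualPair {G : Type*} [Group G] {k : ℕ} (t : Fin k → G) : Prop :=
  ∃ i : ℕ, ∃ h : i + 1 < k, t ⟨i, Nat.lt_of_succ_lt h⟩ = t ⟨i + 1, h⟩

/-- Replace the `p`-th entry of a tuple by two consecutive copies of its square. -/
def doubleAt {G : Type*} [Group G] {m : ℕ} (t : Fin m → G) (p : Fin m) : Fin (m + 1) → G :=
  fun j =>
    if h1 : (j : ℕ) < (p : ℕ) then t ⟨j, h1.trans p.isLt⟩
    else if h2 : (j : ℕ) ≤ (p : ℕ) + 1 then (t p) ^ 2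
    else t ⟨(j : ℕ) - 1, by have := j.isLt; omega⟩

/-- `ω = e^(2πi/3)`. -/
def ω : ℂ := Complex.exp (2 * Real.pi * Complex.I / 3)

def AMat : Matrix (Fin 2) (Fin 2) ℂ := !![1, 0; 0, ω]

def BMat : Matrix (Fin 2) (Fin 2) ℂ :=
  !![(ω - ω ^ 2) / 3, ω ^ 2; (-2 * ω ^ 2) / 3, (-ω - 2 * ω ^ 2) / 3]

/-- The complex reflection group G₄ as the subgroup of GL(2,ℂ) generated by `AMat`, `BMat`. -/
def G4 : Subgroup (GL (Fin 2) ℂ) :=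
  Subgroup.closure {g : GL (Fin 2) ℂ |
    (g : Matrix (Fin 2) (Fin 2) ℂ) = AMat ∨ (g : Matrix (Fin 2) (Fin 2) ℂ) = BMat}

/-- The matrix underlying an element of G₄. -/
def mat (t : G4) : Matrix (Fin 2) (Fin 2) ℂ := ((t : GL (Fin 2) ℂ) : Matrix (Fin 2) (Fin 2) ℂ)

/-- A reflection in G₄: a non-identity element with eigenvalue 1. -/
def IsReflection (t : G4) : Prop := t ≠ 1 ∧ (mat t - 1).det = 0

/-- The conjugacy class R₁ of reflections of determinant ω. -/
def R1 : Set G4 := {t | IsReflection t ∧ (mat t).det = ω}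

/-- The conjugacy class R₂ of reflections of determinant ω². -/
def R2 : Set G4 := {t | IsReflection t ∧ (mat t).det = ω ^ 2}

/-- A Coxeter element of G₄: an element with a primitive 6th root of unity as eigenvalue. -/
def IsCoxeter (c : G4) : Prop :=
  ∃ ζ : ℂ, IsPrimitiveRoot ζ 6 ∧ (mat c - ζ • (1 : Matrix (Fin 2) (Fin 2) ℂ)).det = 0

/-- The relators of G₅: a³, b³, abab(baba)⁻¹. -/
def g5Rels : Set (FreeGroup (Fin 2)) :=
  {FreeGroup.of 0 ^ 3, FreeGroup.of 1 ^ 3,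
    FreeGroup.of 0 * FreeGroup.of 1 * FreeGroup.of 0 * FreeGroup.of 1 *
      (FreeGroup.of 1 * FreeGroup.of 0 * FreeGroup.of 1 * FreeGroup.of 0)⁻¹}

/-- The complex reflection group G₅, by its presentation ⟨a,b | a³ = b³ = 1, abab = baba⟩. -/
abbrev G5 := PresentedGroup g5Rels

def ga : G5 := PresentedGroup.of 0
def gb : G5 := PresentedGroup.of 1

/-- The conjugacy class of `a` in G₅. -/
def S1 : Set G5 := {t | IsConj ga t}
/-- The conjugacy class of `b` in G₅. -/
def S2 : Set G5 := {t | IsConj gb t}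
/-- The conjugacy class of `a²` in G₅. -/
def S3 : Set G5 := {t | IsConj (ga ^ 2) t}
/-- The conjugacy class of `b²` in G₅. -/
def S4 : Set G5 := {t | IsConj (gb ^ 2) t}

/-- A reflection in G₅: a conjugate of a, b, a², or b². -/
def IsReflection5 (t : G5) : Prop := t ∈ S1 ∨ t ∈ S2 ∨ t ∈ S3 ∨ t ∈ S4

/-- A Coxeter element of G₅: an element of order 12. -/
def IsCoxeter5 (c : G5) : Prop := orderOf c = 12

theorem om_sq : ω ^ 2 = -1 - ω := by
  have h : IsPrimitiveRoot ω 3 := by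
    have := Complex.isPrimitiveRoot_exp 3 (by norm_num)
    simpa [ω] using this
  have h1 := h.pow_eq_one
  have h2 : ω - 1 ≠ 0 := sub_ne_zero.mpr (h.ne_one (by norm_num))
  have h3 : (ω - 1) * (ω ^ 2 + ω + 1) = 0 := by linear_combination h1
  have h4 := (mul_eq_zero.mp h3).resolve_left h2
  linear_combination h4

theorem om_cube : ω ^ 3 = 1 := by linear_combination (ω - 1) * om_sq

theorem om_ne : ω ≠ 1 := by
  intro h
  have := om_sq
  rw [h] at this
  norm_num at this

def XMat (u : ℂ) : Matrix (Fin 2) (Fin 2) ℂ :=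
  !![(1 + 2 * ω) / 3, u; -2 * u ^ 2 / 3, -(1 + 2 * ω) / 3]

def QMem (M : Matrix (Fin 2) (Fin 2) ℂ) : Prop :=
  M = 1 ∨ M = XMat 1 ∨ M = XMat ω ∨ M = XMat (ω ^ 2)

def PMem (M : Matrix (Fin 2) (Fin 2) ℂ) : Prop :=
  ∃ X, QMem X ∧ ∃ n : ℕ, M = X * AMat ^ n ∨ M = -(X * AMat ^ n)

theorem A_X1 : AMat * XMat 1 = XMat (ω ^ 2) * AMat := by
  have h := om_sq
  ext i j
  fin_cases i <;> fin_cases j <;> simp [AMat, XMat, Matrix.mul_apply, Fin.sum_univ_two] <;> grind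

theorem A_X2 : AMat * XMat ω = XMat 1 * AMat := by
  have h := om_sq
  ext i j
  fin_cases i <;> fin_cases j <;> simp [AMat, XMat, Matrix.mul_apply, Fin.sum_univ_two] <;> grind

theorem A_X3 : AMat * XMat (ω ^ 2) = XMat ω * AMat := by
  have h := om_sq
  ext i j
  fin_cases i <;> fin_cases j <;> simp [AMat, XMat, Matrix.mul_apply, Fin.sum_univ_two] <;> grind

theorem I_X1 : XMat ω * XMat 1 = -XMat (ω ^ 2) := by
  have h := om_sq
  ext i j
  fin_cases i <;> fin_cases j <;> simp [XMat, Matrix.mul_apply, Fin.sum_univ_two] <;> grind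

theorem I_X2 : XMat ω * XMat ω = -1 := by
  have h := om_sq
  ext i j
  fin_cases i <;> fin_cases j <;> simp [XMat, Matrix.mul_apply, Fin.sum_univ_two] <;> grind

theorem I_X3 : XMat ω * XMat (ω ^ 2) = XMat 1 := by
  have h := om_sq
  ext i j
  fin_cases i <;> fin_cases j <;> simp [XMat, Matrix.mul_apply, Fin.sum_univ_two] <;> grind

theorem B_eq : BMat = XMat ω * AMat := by
  have h := om_sq
  ext i j
  fin_cases i <;> fin_cases j <;> simp [AMat, BMat, XMat, Matrix.mul_apply, Fin.sum_univ_two] <;> grind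

theorem A_pow (n : ℕ) : AMat ^ n = !![1, 0; 0, ω ^ n] := by
  induction n with
  | zero => simp [Matrix.one_fin_two]
  | succ n ih => rw [pow_succ, ih]; simp [AMat, pow_succ]

theorem A_cube : AMat ^ 3 = 1 := by
  rw [A_pow, om_cube, Matrix.one_fin_two]

theorem B_cube : BMat ^ 3 = 1 := by
  have h := om_sq
  rw [pow_succ, pow_two, mul_assoc]
  ext i j
  fin_cases i <;> fin_cases j <;> simp [BMat, Matrix.mul_apply, Fin.sum_univ_two] <;> grind

theorem P_A {M : Matrix (Fin 2) (Fin 2) ℂ} (h : PMem M) : PMem (AMat * M) := by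
  have key : ∀ X, QMem X → ∃ Y, QMem Y ∧ AMat * X = Y * AMat := by
    rintro X (rfl | rfl | rfl | rfl)
    · exact ⟨1, Or.inl rfl, by simp⟩
    · exact ⟨_, Or.inr (Or.inr (Or.inr rfl)), A_X1⟩
    · exact ⟨_, Or.inr (Or.inl rfl), A_X2⟩
    · exact ⟨_, Or.inr (Or.inr (Or.inl rfl)), A_X3⟩
  obtain ⟨X, hX, n, h⟩ := h
  obtain ⟨Y, hY, e⟩ := key X hX
  refine ⟨Y, hY, n + 1, ?_⟩
  rcases h with rfl | rfl
  · left; rw [← mul_assoc, e, pow_succ', mul_assoc]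
  · right; rw [mul_neg, ← mul_assoc, e, pow_succ', mul_assoc]

theorem P_I {M : Matrix (Fin 2) (Fin 2) ℂ} (h : PMem M) : PMem (XMat ω * M) := by
  have key : ∀ X, QMem X → ∃ Y, QMem Y ∧ (XMat ω * X = Y ∨ XMat ω * X = -Y) := by
    rintro X (rfl | rfl | rfl | rfl)
    · exact ⟨_, Or.inr (Or.inr (Or.inl rfl)), Or.inl (by simp)⟩
    · exact ⟨_, Or.inr (Or.inr (Or.inr rfl)), Or.inr I_X1⟩
    · exact ⟨_, Or.inl rfl, Or.inr I_X2⟩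
    · exact ⟨_, Or.inr (Or.inl rfl), Or.inl I_X3⟩
  obtain ⟨X, hX, n, h⟩ := h
  obtain ⟨Y, hY, e⟩ := key X hX
  refine ⟨Y, hY, n, ?_⟩
  rcases h with rfl | rfl <;> rcases e with e | e
  · left; rw [← mul_assoc, e]
  · right; rw [← mul_assoc, e, neg_mul]
  · right; rw [mul_neg, ← mul_assoc, e]
  · left; rw [mul_neg, ← mul_assoc, e, neg_mul, neg_neg]

theorem P_B {M : Matrix (Fin 2) (Fin 2) ℂ} (h : PMem M) : PMem (BMat * M) := by
  rw [B_eq, mul_assoc]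
  exact P_I (P_A h)

theorem inv_of_cube {x : GL (Fin 2) ℂ} (h : (x : Matrix (Fin 2) (Fin 2) ℂ) ^ 3 = 1) :
    x⁻¹ = x * x := by
  have : x ^ 3 = 1 := Units.ext (by simpa using h)
  rw [inv_eq_iff_mul_eq_one, ← this]
  rw [pow_succ, pow_two, mul_assoc]

theorem G4_P (g : G4) : PMem (mat g) := by
  obtain ⟨g, hg⟩ := g
  change PMem (g : Matrix (Fin 2) (Fin 2) ℂ)
  induction hg using Subgroup.closure_induction_left with
  | one => exact ⟨1, Or.inl rfl, 0, by simp⟩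
  | mul_left x hx y hy h =>
    rw [Units.val_mul]
    rcases hx with hx | hx <;> rw [hx]
    · exact P_A h
    · exact P_B h
  | inv_mul_cancel x hx y hy h =>
    rcases hx with hx | hx
    · rw [inv_of_cube (by rw [hx, A_cube]), Units.val_mul, Units.val_mul, hx, mul_assoc]
      exact P_A (P_A h)
    · rw [inv_of_cube (by rw [hx, B_cube]), Units.val_mul, Units.val_mul, hx, mul_assoc]
      exact P_B (P_B h)

theorem X_det {u : ℂ} (h : u ^ 3 = 1) : (XMat u).det = 1 := by
  have := om_sq
  simp [XMat, Matrix.det_fin_two]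
  grind

theorem X_tr (u : ℂ) : (XMat u).trace = 0 := by
  simp [XMat, Matrix.trace_fin_two]
  ring

theorem Q_facts {X : Matrix (Fin 2) (Fin 2) ℂ} (h : QMem X) :
    X.det = 1 ∧ (X = 1 ∨ X.trace = 0) := by
  have h3 := om_cube
  rcases h with rfl | rfl | rfl | rfl
  · simp
  · exact ⟨X_det (by simp), Or.inr (X_tr _)⟩
  · exact ⟨X_det h3, Or.inr (X_tr _)⟩
  · exact ⟨X_det (by rw [← pow_mul, mul_comm, pow_mul, h3, one_pow]), Or.inr (X_tr _)⟩

theorem P_facts {M : Matrix (Fin 2) (Fin 2) ℂ} (h : PMem M) :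
    (M.det = 1 ∨ M.det = ω ∨ M.det = ω ^ 2) ∧
    (M.det = 1 → M = 1 ∨ M = -1 ∨ M.trace = 0) := by
  obtain ⟨X, hX, n, h⟩ := h
  obtain ⟨hd, ht⟩ := Q_facts hX
  have hdet : M.det = ω ^ n := by
    rcases h with rfl | rfl <;> simp [Matrix.det_neg, hd, AMat]
  rw [hdet]
  constructor
  · rw [← Nat.div_add_mod n 3, pow_add, pow_mul, om_cube, one_pow, one_mul]
    have : n % 3 < 3 := Nat.mod_lt _ (by norm_num)
    interval_cases n % 3 <;> simp
  · intro hn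
    rw [A_pow, hn, ← Matrix.one_fin_two, mul_one] at h
    rcases h with rfl | rfl <;> rcases ht with ht | ht <;> simp [ht]

theorem det_sub_smul_one (M : Matrix (Fin 2) (Fin 2) ℂ) (z : ℂ) :
    (M - z • (1 : Matrix (Fin 2) (Fin 2) ℂ)).det = M.det - M.trace * z + z ^ 2 := by
  simp [Matrix.det_fin_two, Matrix.trace_fin_two]
  ring

theorem cox_det {c : G4} (h : IsCoxeter c) : (mat c).det ≠ 1 := by
  intro h1
  obtain ⟨z, hz, h⟩ := h
  rw [det_sub_smul_one, h1] at h
  have h4 : z ^ 4 ≠ 1 := hz.pow_ne_one_of_pos_of_lt (by norm_num) (by norm_num)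
  apply h4
  rcases (P_facts (G4_P c)).2 h1 with e | e | e <;> rw [e] at h <;>
    simp [Matrix.trace_fin_two] at h
  · have : z - 1 = 0 := by
      apply pow_eq_zero_iff (two_ne_zero) |>.mp
      linear_combination h
    grind
  · have : z + 1 = 0 := by
      apply pow_eq_zero_iff (two_ne_zero) |>.mp
      linear_combination h
    grind
  · grind

theorem refl_class {t : G4} (h : IsReflection t) : t ∈ R1 ∨ t ∈ R2 := by
  have hP := P_facts (G4_P t)
  rcases hP.1 with h1 | h1 | h1
  · exfalso
    obtain ⟨hne, h⟩ := h
    have hh := det_sub_smul_one (mat t) 1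
    rw [one_smul, h, h1] at hh
    rcases hP.2 h1 with e | e | e
    · exact hne (Subtype.ext (Units.ext e))
    · rw [e] at hh
      norm_num [Matrix.trace_fin_two] at hh
    · rw [e] at hh
      norm_num at hh
  · exact Or.inl ⟨h, h1⟩
  · exact Or.inr ⟨h, h1⟩

def dHom : G4 →* ℂ :=
  (Matrix.detMonoidHom.comp (Units.coeHom (Matrix (Fin 2) (Fin 2) ℂ))).comp G4.subtype

theorem prod_det {k : ℕ} (t : Fin k → G4) :
    (mat (List.ofFn t).prod).det = ∏ i, (mat (t i)).det := by
  change dHom _ = ∏ i, dHom (t i)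
  rw [map_list_prod, List.map_ofFn, List.prod_ofFn]
  rfl

theorem prod_eq {k : ℕ} (t : Fin k → G4) (h : ∀ i, IsReflection (t i)) :
    ∃ a b : ℕ, a + b = k ∧ {i : Fin k | t i ∈ R1}.ncard = a ∧ {i : Fin k | t i ∈ R2}.ncard = b ∧
      (mat (List.ofFn t).prod).det = ω ^ a * (ω ^ 2) ^ b := by
  classical
  have hne : ω ≠ ω ^ 2 := by
    intro h
    have h1 := om_cube
    have h2 : ω * ω ^ 2 = 1 := by rw [← h1]; ring
    rw [← h] at h2
    exact om_ne (by rw [h, pow_two, h2])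
  have e2 : {i : Fin k | t i ∈ R2} = {i : Fin k | ¬ t i ∈ R1} := by
    ext i
    simp only [Set.mem_setOf_eq]
    constructor
    · intro h2 h1
      exact hne (h1.2.symm.trans h2.2)
    · exact (refl_class (h i)).resolve_left
  refine ⟨(Finset.univ.filter fun i => t i ∈ R1).card,
    (Finset.univ.filter fun i => ¬ t i ∈ R1).card, ?_, ?_, ?_, ?_⟩
  · rw [Finset.card_filter_add_card_filter_not]; simp
  · rw [← Set.ncard_coe_finset]; simp
  · rw [e2, ← Set.ncard_coe_finset]; simp
  · rw [prod_det, ← Finset.prod_filter_mul_prod_filter_not Finset.univ (fun i => t i ∈ R1)]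
    congr 1
    · apply Finset.prod_eq_pow_card
      intro i hi
      exact (Finset.mem_filter.mp hi).2.2
    · apply Finset.prod_eq_pow_card
      intro i hi
      exact ((refl_class (h i)).resolve_left (Finset.mem_filter.mp hi).2).2

theorem g4_class_distribution :
    (∀ c : G4, IsCoxeter c → ∀ t : Fin 3 → G4, (∀ i, IsReflection (t i)) →
      (List.ofFn t).prod = c → (∃ i, t i ∈ R1) ∧ (∃ i, t i ∈ R2)) ∧
    (∀ k : ℕ, 4 ≤ k → ∀ c : G4, IsCoxeter c → ∀ t : Fin k → G4,
      (∀ i, IsReflection (t i)) → (List.ofFn t).prod = c →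
      3 ≤ {i : Fin k | t i ∈ R1}.ncard ∨ 3 ≤ {i : Fin k | t i ∈ R2}.ncard) := by 
  have h3 := om_cube
  constructor
  · intro c hc t ht hp
    obtain ⟨a, b, hab, ha, hb, hd⟩ := prod_eq t ht
    rw [hp] at hd
    have hne := cox_det hc
    have pos : ∀ S : Set G4, {i : Fin 3 | t i ∈ S}.ncard ≠ 0 → ∃ i, t i ∈ S := fun S hS =>
      Set.nonempty_of_ncard_ne_zero hS
    constructor
    · apply pos
      intro h0
      have ea : a = 0 := by omega
      have eb : b = 3 := by omega
      apply hne
      rw [hd, ea, eb]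
      linear_combination (ω ^ 3 + 1) * h3
    · apply pos
      intro h0
      have ea : a = 3 := by omega
      have eb : b = 0 := by omega
      apply hne
      rw [hd, ea, eb]
      linear_combination h3
  · intro k hk c hc t ht hp
    obtain ⟨a, b, hab, ha, hb, hd⟩ := prod_eq t ht
    rw [hp] at hd
    have hne := cox_det hc
    rw [ha, hb]
    by_contra hcon
    have ea : a = 2 := by omega
    have eb : b = 2 := by omega
    apply hne
    rw [hd, ea, eb]
    linear_combination (ω ^ 3 + 1) * h3
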